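/- arXiv:1404.1809 — 7 statements merged into one kernel-verified Lean document; each statement's English description precedes it below -/
import Mathlib

section
/- Let p be a prime, K a perfect field of characteristic p, W = 𝕎(K) the ring of p-typical Witt vectors, and σ the Witt vector Frobenius. A 3×3 matrix A over W satisfies both A * F = F * A^σ and A^σ * V = V * A if and only if there exist a, b, c ∈ W with σ³(a) = a, σ³(b) = b, σ³(c) = c such that A = !![a, p·σ(b), p·σ(c); σ(σ(c)), σ(a), p·σ(σ(b)); b, c, σ(σ(a))]; that is, if and only if A belongs to R. -/
open Matrix

/-- The Witt vector Frobenius `σ` on `W = 𝕎(K)`. -/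
noncomputable def wittFrob (p : ℕ) [Fact p.Prime] (K : Type*) [CommRing K] :
    WittVector p K →+* WittVector p K :=
  WittVector.frobenius

/-- The matrix of Frobenius on the Dieudonné module of `H_{2,1}`. -/
noncomputable def Fmat (p : ℕ) [Fact p.Prime] (K : Type*) [CommRing K] :
    Matrix (Fin 3) (Fin 3) (WittVector p K) :=
  !![0, 0, (p : WittVector p K); 1, 0, 0; 0, 1, 0]

/-- The matrix of Verschiebung on the Dieudonné module of `H_{2,1}`. -/
noncomputable def Vmat (p : ℕ) [Fact p.Prime] (K : Type*) [CommRing K] :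
    Matrix (Fin 3) (Fin 3) (WittVector p K) :=
  !![0, (p : WittVector p K), 0; 0, 0, (p : WittVector p K); 1, 0, 0]

/-- The set `R` of matrices `!![a, p·σ(b), p·σ(c); σ²(c), σ(a), p·σ²(b); b, c, σ²(a)]`
with `σ³(a) = a`, `σ³(b) = b`, `σ³(c) = c`. -/
noncomputable def Rset (p : ℕ) [Fact p.Prime] (K : Type*) [CommRing K] :
    Set (Matrix (Fin 3) (Fin 3) (WittVector p K)) :=
  {A | ∃ a b c : WittVector p K,
    wittFrob p K (wittFrob p K (wittFrob p K a)) = a ∧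
    wittFrob p K (wittFrob p K (wittFrob p K b)) = b ∧
    wittFrob p K (wittFrob p K (wittFrob p K c)) = c ∧
    A = !![a, (p : WittVector p K) * wittFrob p K b, (p : WittVector p K) * wittFrob p K c;
           wittFrob p K (wittFrob p K c), wittFrob p K a,
             (p : WittVector p K) * wittFrob p K (wittFrob p K b);
           b, c, wittFrob p K (wittFrob p K a)]}

/-- A `3×3` matrix `A` over `W = 𝕎(K)` satisfies `A·F = F·Aᵠ` and `Aᵠ·V = V·A`
(entrywise Frobenius `σ`) if and only if `A ∈ R`. -/
theorem stmt_2 (p : ℕ) [Fact p.Prime] (K : Type*) [Field K] [CharP K p] [PerfectRing K p]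
    (A : Matrix (Fin 3) (Fin 3) (WittVector p K)) :
    (A * Fmat p K = Fmat p K * A.map (wittFrob p K) ∧
      A.map (wittFrob p K) * Vmat p K = Vmat p K * A) ↔ A ∈ Rset p K := by
  have hp : (p : WittVector p K) ≠ 0 := WittVector.p_nonzero p K
  have hσ : wittFrob p K (p : WittVector p K) = p := map_natCast _ p
  constructor
  · rintro ⟨h, -⟩
    have e : ∀ i j, (A * Fmat p K) i j = (Fmat p K * A.map (wittFrob p K)) i j :=
      fun i j => by rw [h]
    have e00 := e 0 0
    have e01 := e 0 1
    have e02 := e 0 2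
    have e10 := e 1 0
    have e11 := e 1 1
    have e12 := e 1 2
    have e20 := e 2 0
    have e21 := e 2 1
    have e22 := e 2 2
    simp [Fmat, Matrix.mul_apply, Fin.sum_univ_three] at e00 e01 e02 e10 e11 e12 e20 e21 e22
    have k10 : A 1 0 = wittFrob p K (wittFrob p K (A 2 1)) := by
      apply mul_left_cancel₀ hp
      rw [mul_comm, e12, e01, map_mul, hσ]
    have k00 : A 0 0 = wittFrob p K (A 2 2) := by
      apply mul_left_cancel₀ hp
      rw [mul_comm, ← e02]
      first | done | simp [e02]
    have k12 : A 1 2 = p * wittFrob p K (wittFrob p K (A 2 0)) := by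
      rw [e11, e00, map_mul, hσ]
    have k20 : A 2 0 = wittFrob p K (wittFrob p K (wittFrob p K (A 2 0))) := by
      apply mul_left_cancel₀ hp
      rw [mul_comm, e22, k12, map_mul, hσ]
    have k22 : A 2 2 = wittFrob p K (wittFrob p K (A 0 0)) := by rw [e21, e10]
    refine ⟨A 0 0, A 2 0, A 2 1, ?_, k20.symm, ?_, ?_⟩
    · rw [← k22, ← k00]
    · rw [← k10, ← e20]
    · ext1 i j
      fin_cases i <;> fin_cases j <;> simp <;> assumption
  · rintro ⟨a, b, c, ha, hb, hc, rfl⟩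
    constructor <;> ext1 i j <;> fin_cases i <;> fin_cases j <;>
      simp [Fmat, Vmat, Matrix.mul_apply, Fin.sum_univ_three, hσ, ha, hb, hc, mul_comm]
end

section
/- Let p be a prime, K a perfect field of characteristic p, W = 𝕎(K) the ring of p-typical Witt vectors, and σ the Witt vector Frobenius. The set R of matrices !![a, p·σ(b), p·σ(c); σ(σ(c)), σ(a), p·σ(σ(b)); b, c, σ(σ(a))], with a, b, c ∈ W satisfying σ³(a) = a, σ³(b) = b, σ³(c) = c, is a subring of the ring of 3×3 matrices over W (it contains 0 and the identity matrix and is closed under addition, negation and matrix multiplication). -/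
open Matrix

/-- The set `R` is a subring of the ring of `3×3` matrices over `W = 𝕎(K)`:
it contains `0` and `1` and is closed under addition, negation and multiplication. -/
theorem stmt_3 (p : ℕ) [Fact p.Prime] (K : Type*) [Field K] [CharP K p] [PerfectRing K p] :
    ∃ S : Subring (Matrix (Fin 3) (Fin 3) (WittVector p K)),
      (S : Set (Matrix (Fin 3) (Fin 3) (WittVector p K))) = Rset p K := by
  refine ⟨{ carrier := Rset p K, mul_mem' := ?_, one_mem' := ?_, add_mem' := ?_,
            zero_mem' := ?_, neg_mem' := ?_ }, rfl⟩
  · rintro _ _ ⟨a, b, c, ha, hb, hc, rfl⟩ ⟨x, y, z, hx, hy, hz, rfl⟩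
    obtain ⟨s, hs⟩ : ∃ s, s = wittFrob p K := ⟨_, rfl⟩
    refine ⟨a * x + p * s b * s (s z) + p * s c * y,
      b * x + c * s (s z) + s (s a) * y,
      p * b * s y + c * s x + s (s a) * z, ?_, ?_, ?_, ?_⟩ <;> rw [← hs] at ha hb hc hx hy hz ⊢
    · simp only [map_add, map_mul, map_natCast, ha, hb, hc, hx, hy, hz]
    · simp only [map_add, map_mul, map_natCast, ha, hb, hc, hx, hy, hz]
    · simp only [map_add, map_mul, map_natCast, ha, hb, hc, hx, hy, hz]
    · ext i j : 2
      fin_cases i <;> fin_cases j <;>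
        simp [Matrix.mul_apply, Fin.sum_univ_three, ha, hb, hc, hx, hy, hz] <;> ring
  · refine ⟨1, 0, 0, by simp, by simp, by simp, ?_⟩
    ext i j : 2
    fin_cases i <;> fin_cases j <;> simp
  · rintro _ _ ⟨a, b, c, ha, hb, hc, rfl⟩ ⟨x, y, z, hx, hy, hz, rfl⟩
    refine ⟨a + x, b + y, c + z, by simp [*], by simp [*], by simp [*], ?_⟩
    ext i j : 2
    fin_cases i <;> fin_cases j <;> simp [mul_add]
  · refine ⟨0, 0, 0, by simp, by simp, by simp, ?_⟩
    ext i j : 2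
    fin_cases i <;> fin_cases j <;> simp
  · rintro _ ⟨a, b, c, ha, hb, hc, rfl⟩
    refine ⟨-a, -b, -c, by simp [*], by simp [*], by simp [*], ?_⟩
    ext i j : 2
    fin_cases i <;> fin_cases j <;> simp
end

section
/- Let p be a prime and K a field of characteristic p. A 3×3 matrix Ā over K satisfies both Ā * F̄ = F̄ * Ā^φ and Ā^φ * V̄ = V̄ * Ā if and only if there exist a, b, c ∈ K with a^(p^3) = a such that Ā = !![a, 0, 0; b, a^p, 0; c, b^p, a^(p^2)]. -/
open Matrix

/-- The matrix of Frobenius on the Dieudonné module of `H_{2,1}[p]`. -/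
def FmatBar (K : Type*) [CommRing K] : Matrix (Fin 3) (Fin 3) K :=
  !![0, 0, 0; 1, 0, 0; 0, 1, 0]

/-- The matrix of Verschiebung on the Dieudonné module of `H_{2,1}[p]`. -/
def VmatBar (K : Type*) [CommRing K] : Matrix (Fin 3) (Fin 3) K :=
  !![0, 0, 0; 0, 0, 0; 1, 0, 0]

/-- A `3×3` matrix `Ā` over a field `K` of characteristic `p` satisfies
`Ā·F̄ = F̄·Āᵠ` and `Āᵠ·V̄ = V̄·Ā` (entrywise `p`-th power `φ`) if and only if
`Ā = !![a, 0, 0; b, a^p, 0; c, b^p, a^(p²)]` for some `a, b, c ∈ K` with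
`a^(p³) = a`. -/
theorem stmt_4 (p : ℕ) [Fact p.Prime] (K : Type*) [Field K] [CharP K p]
    (A : Matrix (Fin 3) (Fin 3) K) :
    (A * FmatBar K = FmatBar K * A.map (· ^ p) ∧
      A.map (· ^ p) * VmatBar K = VmatBar K * A) ↔
    ∃ a b c : K, a ^ p ^ 3 = a ∧
      A = !![a, 0, 0; b, a ^ p, 0; c, b ^ p, a ^ p ^ 2] := by
  have hp : p ≠ 0 := (Fact.out : p.Prime).ne_zero
  constructor
  · rintro ⟨h1, h2⟩
    have e1 := fun i j => congrFun (congrFun h1 i) j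
    have e2 := fun i j => congrFun (congrFun h2 i) j
    have h01 : A 0 1 = 0 := by
      simpa [FmatBar, Matrix.mul_apply, Fin.sum_univ_three] using e1 0 0
    have h02 : A 0 2 = 0 := by
      simpa [FmatBar, Matrix.mul_apply, Fin.sum_univ_three] using e1 0 1
    have h11 : A 1 1 = A 0 0 ^ p := by
      simpa [FmatBar, Matrix.mul_apply, Fin.sum_univ_three] using e1 1 0
    have h12 : A 1 2 = 0 := by
      simpa [FmatBar, Matrix.mul_apply, Fin.sum_univ_three, h01, hp] using e1 1 1
    have h21 : A 2 1 = A 1 0 ^ p := by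
      simpa [FmatBar, Matrix.mul_apply, Fin.sum_univ_three] using e1 2 0
    have h22 : A 2 2 = A 1 1 ^ p := by
      simpa [FmatBar, Matrix.mul_apply, Fin.sum_univ_three] using e1 2 1
    have h00 : A 2 2 ^ p = A 0 0 := by
      simpa [VmatBar, Matrix.mul_apply, Fin.sum_univ_three] using e2 2 0
    have h22' : A 2 2 = A 0 0 ^ p ^ 2 := by
      rw [h22, h11, ← pow_mul, sq]
    refine ⟨A 0 0, A 1 0, A 2 0, ?_, ?_⟩
    · rw [pow_succ p 2, pow_mul, ← h22', h00]
    · ext i j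
      fin_cases i <;> fin_cases j <;> simp [h01, h02, h11, h12, h21, h22']
  · rintro ⟨a, b, c, ha, rfl⟩
    have ha' : (a ^ p ^ 2) ^ p = a := by rw [← pow_mul, ← pow_succ, ha]
    have ha2 : (a ^ p) ^ p = a ^ p ^ 2 := by rw [← pow_mul, sq]
    constructor
    · ext i j
      fin_cases i <;> fin_cases j <;>
        simp [FmatBar, Matrix.mul_apply, Fin.sum_univ_three, hp, ha2]
    · ext i j
      fin_cases i <;> fin_cases j <;>
        simp [VmatBar, Matrix.mul_apply, Fin.sum_univ_three, hp, ha']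
end

section
/- Let p be a prime and K a field of characteristic p. The set S of matrices !![a, 0, 0; b, a^p, 0; c, b^p, a^(p^2)] with a, b, c ∈ K, a^(p^3) = a and a ≠ 0 is a subgroup of GL₃(K) (every element of S is invertible, S is closed under matrix multiplication and matrix inversion, and contains the identity), and the map sending such a matrix to its (1,1)-entry a is a surjective group homomorphism from S onto the subgroup {u ∈ Kˣ : u^(p^3) = u} of Kˣ, whose kernel is exactly the set of matrices in S with a = 1. -/
open Matrix

/-- The set `S` of matrices `!![a,0,0; b,a^p,0; c,b^p,a^(p²)]` with `a^(p³) = a`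
and `a ≠ 0`. -/
def Sset (p : ℕ) (K : Type*) [Field K] : Set (Matrix (Fin 3) (Fin 3) K) :=
  {M | ∃ a b c : K, a ^ p ^ 3 = a ∧ a ≠ 0 ∧
    M = !![a, 0, 0; b, a ^ p, 0; c, b ^ p, a ^ p ^ 2]}

theorem Sset_mul (p : ℕ) [Fact p.Prime] (K : Type*) [Field K] [CharP K p]
    {M N : Matrix (Fin 3) (Fin 3) K} (hM : M ∈ Sset p K) (hN : N ∈ Sset p K) :
    M * N ∈ Sset p K ∧ (M * N) 0 0 = M 0 0 * N 0 0 := by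
  obtain ⟨a, b, c, h, h0, rfl⟩ := hM
  obtain ⟨a', b', c', h', h0', rfl⟩ := hN
  refine ⟨⟨a * a', b * a' + a ^ p * b', c * a' + b ^ p * b' + a ^ p ^ 2 * c',
    by rw [mul_pow, h, h'], mul_ne_zero h0 h0', ?_⟩, ?_⟩
  · have e : (b * a' + a ^ p * b') ^ p = b ^ p * a' ^ p + a ^ p ^ 2 * b' ^ p := by
      rw [add_pow_char, mul_pow, mul_pow, ← pow_mul, sq]
    rw [e]
    ext i j
    fin_cases i <;> fin_cases j <;>
      simp [Matrix.mul_apply, Fin.sum_univ_three, mul_pow]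
  · simp [Matrix.mul_apply, Fin.sum_univ_three]

theorem Sset_one (p : ℕ) [Fact p.Prime] (K : Type*) [Field K] [CharP K p] :
    (1 : Matrix (Fin 3) (Fin 3) K) ∈ Sset p K := by
  have hp : p ≠ 0 := (Fact.out : p.Prime).ne_zero
  refine ⟨1, 0, 0, by simp, one_ne_zero, ?_⟩
  ext i j
  fin_cases i <;> fin_cases j <;> simp [hp]

theorem Sset_inv (p : ℕ) [Fact p.Prime] (K : Type*) [Field K] [CharP K p]
    {M : Matrix (Fin 3) (Fin 3) K} (hM : M ∈ Sset p K) :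
    ∃ N ∈ Sset p K, M * N = 1 := by
  have hp : p ≠ 0 := (Fact.out : p.Prime).ne_zero
  obtain ⟨a, b, c, h, h0, rfl⟩ := hM
  obtain ⟨b', hb⟩ : ∃ b', b * a⁻¹ + a ^ p * b' = 0 :=
    ⟨-(b * a⁻¹) / a ^ p, by field_simp; ring⟩
  obtain ⟨c', hc⟩ : ∃ c', c * a⁻¹ + b ^ p * b' + a ^ p ^ 2 * c' = 0 :=
    ⟨-(c * a⁻¹ + b ^ p * b') / a ^ p ^ 2, by field_simp; ring⟩
  refine ⟨_, ⟨a⁻¹, b', c', by rw [inv_pow, h], inv_ne_zero h0, rfl⟩, ?_⟩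
  have e : b ^ p * (a ^ p)⁻¹ + a ^ p ^ 2 * b' ^ p = 0 := by
    have := congrArg (· ^ p) hb
    simp only [add_pow_char, mul_pow, ← pow_mul, zero_pow hp, inv_pow] at this
    rwa [sq]
  ext i j
  fin_cases i <;> fin_cases j <;>
    simp [Matrix.mul_apply, Fin.sum_univ_three, h0, hb, hc, e]

/-- Every element of `S` is invertible; `S` is (the underlying set of matrices of)
a subgroup of `GL₃(K)`; and the `(1,1)`-entry map is a surjective group homomorphism
from `S` onto the subgroup `{u ∈ Kˣ : u^(p³) = u}` of `Kˣ`, with kernel exactly the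
matrices in `S` whose `(1,1)`-entry is `1`. -/
theorem stmt_5 (p : ℕ) [Fact p.Prime] (K : Type*) [Field K] [CharP K p] :
    (∀ M ∈ Sset p K, IsUnit M) ∧
    ∃ H : Subgroup (GL (Fin 3) K),
      (∀ M : GL (Fin 3) K, M ∈ H ↔ (M : Matrix (Fin 3) (Fin 3) K) ∈ Sset p K) ∧
      ∃ φ : H →* Kˣ,
        (∀ M : H, (φ M : K) = ((M : GL (Fin 3) K) : Matrix (Fin 3) (Fin 3) K) 0 0) ∧
        (φ.range : Set Kˣ) = {u : Kˣ | (u : K) ^ p ^ 3 = (u : K)} ∧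
        (∀ M : H, M ∈ φ.ker ↔
          ((M : GL (Fin 3) K) : Matrix (Fin 3) (Fin 3) K) 0 0 = 1) := by
  have hu : ∀ M ∈ Sset p K, IsUnit M := fun M hM => by
    obtain ⟨N, -, h⟩ := Sset_inv p K hM
    exact IsUnit.of_mul_eq_one N h
  refine ⟨hu, ?_⟩
  let H : Subgroup (GL (Fin 3) K) :=
    { carrier := {M | (M : Matrix (Fin 3) (Fin 3) K) ∈ Sset p K}
      mul_mem' := fun {x y} hx hy => (Sset_mul p K hx hy).1
      one_mem' := Sset_one p K
      inv_mem' := fun {x} hx => by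
        obtain ⟨N, hN, h⟩ := Sset_inv p K hx
        have : ((x⁻¹ : GL (Fin 3) K) : Matrix (Fin 3) (Fin 3) K) = N :=
          Units.inv_eq_of_mul_eq_one_right h
        change ((x⁻¹ : GL (Fin 3) K) : Matrix (Fin 3) (Fin 3) K) ∈ Sset p K
        rw [this]
        exact hN }
  have hH : ∀ M : GL (Fin 3) K, M ∈ H ↔ (M : Matrix (Fin 3) (Fin 3) K) ∈ Sset p K :=
    fun M => Iff.rfl
  let ψ : H →* K :=
    { toFun := fun M => ((M : GL (Fin 3) K) : Matrix (Fin 3) (Fin 3) K) 0 0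
      map_one' := by simp
      map_mul' := fun x y => (Sset_mul p K x.2 y.2).2 }
  have hφ : ∀ M : H, (ψ.toHomUnits M : K) =
      ((M : GL (Fin 3) K) : Matrix (Fin 3) (Fin 3) K) 0 0 := fun M => rfl
  refine ⟨H, hH, ψ.toHomUnits, hφ, ?_, ?_⟩
  · ext u
    constructor
    · rintro ⟨M, rfl⟩
      obtain ⟨a, b, c, h, h0, e⟩ := M.2
      have : ((M : GL (Fin 3) K) : Matrix (Fin 3) (Fin 3) K) 0 0 = a := by
        rw [e]; simp
      simp only [Set.mem_setOf_eq]
      rw [hφ, this, h]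
    · intro h
      have hm : !![(u : K), 0, 0; 0, (u : K) ^ p, 0; 0, 0 ^ p, (u : K) ^ p ^ 2] ∈ Sset p K :=
        ⟨u, 0, 0, h, u.ne_zero, rfl⟩
      obtain ⟨g, hg⟩ := hu _ hm
      refine ⟨⟨g, (hH g).2 (hg ▸ hm)⟩, Units.ext ?_⟩
      rw [hφ]
      simp [hg]
  · intro M
    rw [MonoidHom.mem_ker, ← hφ, Units.val_eq_one]
end

section
/- Let p be a prime, K a perfect field of characteristic p, and W = 𝕎(K) the ring of p-typical Witt vectors, with Witt vector Frobenius σ. For every ā ∈ K with ā^(p^3) = ā and ā ≠ 0, there exists a matrix A belonging to R which is invertible in the ring of 3×3 matrices over W and whose image under the entrywise 0-th Witt component map W → K is the diagonal matrix !![ā, 0, 0; 0, ā^p, 0; 0, 0, ā^(p^2)]. (One may take A to be the diagonal matrix of Teichmüller representatives diag(teich(ā), teich(ā^p), teich(ā^(p^2))).) -/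
open Matrix

/-- For every `abar ∈ K` with `abar^(p³) = abar` and `abar ≠ 0`, there is an invertible matrix
`A ∈ R` whose entrywise `0`-th Witt component is the diagonal matrix
`diag(abar, abar^p, abar^(p²))`. -/
theorem stmt_7 (p : ℕ) [Fact p.Prime] (K : Type*) [Field K] [CharP K p] [PerfectRing K p]
    (abar : K) (h1 : abar ^ p ^ 3 = abar) (h2 : abar ≠ 0) :
    ∃ A ∈ Rset p K, IsUnit A ∧
      A.map (fun x => x.coeff 0) = !![abar, 0, 0; 0, abar ^ p, 0; 0, 0, abar ^ p ^ 2] := by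
  have hF : ∀ x : K, wittFrob p K (WittVector.teichmuller p x) = WittVector.teichmuller p (x ^ p) := by
    intro x
    rw [wittFrob, WittVector.frobenius_eq_map_frobenius, WittVector.map_teichmuller, frobenius_def]
  have hU : ∀ x : K, x ≠ 0 → IsUnit (WittVector.teichmuller p x) := fun x hx =>
    (IsUnit.mk0 x hx).map (WittVector.teichmuller p)
  have h3 : ((abar ^ p) ^ p) ^ p = abar := by
    rw [← pow_mul, ← pow_mul, ← pow_three, h1]
  refine ⟨_, ⟨WittVector.teichmuller p abar, 0, 0, ?_, by simp, by simp, rfl⟩, ?_, ?_⟩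
  · rw [hF, hF, hF, h3]
  · rw [Matrix.isUnit_iff_isUnit_det, Matrix.det_fin_three]
    simp only [hF]
    simpa using ⟨⟨hU _ h2, (hU _ h2).pow p⟩, ((hU _ h2).pow p).pow p⟩
  · ext i j
    fin_cases i <;> fin_cases j <;>
      simp [-map_pow, hF, WittVector.teichmuller_coeff_zero, ← pow_mul, pow_two]
end

section
/- Let p be a prime and K a perfect field of characteristic p, with Frobenius automorphism σ(x) = x^p, and let τ : Kˣ → Kˣ be τ(a) = σ(a)·(σ⁻¹(a))⁻¹. For a ∈ Kˣ, let M_a be the K-vector space K × K equipped with the σ-semilinear map F(u,v) = (0, σ(u)) and the σ⁻¹-semilinear map V_a(u,v) = (0, a · σ⁻¹(u)). Then for a, a' ∈ Kˣ, there exists a K-linear bijection g : K × K → K × K satisfying g ∘ F = F ∘ g and g ∘ V_a = V_{a'} ∘ g if and only if a' · a⁻¹ lies in the image of τ. -/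
/-- The Dieudonné modules `M_a = (K × K, F, V_a)` with `F(u,v) = (0, σ(u))` and
`V_a(u,v) = (0, a·σ⁻¹(u))` satisfy: `M_a ≅ M_{a'}` (via a `K`-linear bijection
commuting with `F` and intertwining `V_a` with `V_{a'}`) if and only if `a'·a⁻¹`
lies in the image of `τ(b) = σ(b)·(σ⁻¹(b))⁻¹`. -/
theorem stmt_12 (p : ℕ) [Fact p.Prime] (K : Type*) [Field K] [CharP K p] [PerfectRing K p]
    (a a' : Kˣ) :
    (∃ g : (K × K) ≃ₗ[K] K × K,
        (∀ w : K × K, g (0, w.1 ^ p) = (0, (g w).1 ^ p)) ∧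
        (∀ w : K × K, g (0, (a : K) * (frobeniusEquiv K p).symm w.1) =
          (0, (a' : K) * (frobeniusEquiv K p).symm (g w).1))) ↔
    ∃ b : Kˣ, ((a' * a⁻¹ : Kˣ) : K) =
      frobeniusEquiv K p (b : K) * ((frobeniusEquiv K p).symm (b : K))⁻¹ := by
  constructor
  · rintro ⟨g, hF, hV⟩
    have h1 := hF (1, 0)
    have h2 := hV (1, 0)
    simp only [one_pow, map_one, mul_one] at h1 h2
    set c : K := (g (1, 0)).1 with hc
    have h3 : g (0, (a : K)) = (0, (a : K) * c ^ p) := by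
      have h : ((0, (a : K)) : K × K) = (a : K) • ((0, 1) : K × K) := by simp
      rw [h, map_smul, h1]
      simp
    have h4 : (a : K) * c ^ p = a' * (frobeniusEquiv K p).symm c := by
      have h := h3.symm.trans h2
      exact congrArg Prod.snd h
    have hc0 : c ≠ 0 := by
      intro h0
      rw [h0, zero_pow (Fact.out : p.Prime).ne_zero] at h1
      have h : ((0, 1) : K × K) = 0 := g.map_eq_zero_iff.mp h1
      exact one_ne_zero (congrArg Prod.snd h)
    refine ⟨Units.mk0 c hc0, ?_⟩
    have hs : (frobeniusEquiv K p).symm c ≠ 0 := by simpa using hc0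
    have ha : (a : K) ≠ 0 := a.ne_zero
    rw [Units.val_mk0, frobeniusEquiv_apply, frobenius_def, Units.val_mul,
      Units.val_inv_eq_inv_val]
    field_simp
    linear_combination -h4
  · rintro ⟨b, hb⟩
    have hb0 : (b : K) ≠ 0 := b.ne_zero
    have hs : (frobeniusEquiv K p).symm (b : K) ≠ 0 := by simp
    have ha : (a : K) ≠ 0 := a.ne_zero
    rw [frobeniusEquiv_apply, frobenius_def, Units.val_mul,
      Units.val_inv_eq_inv_val] at hb
    field_simp at hb
    refine ⟨LinearEquiv.prodCongr (LinearEquiv.smulOfNeZero K K (b : K) hb0)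
      (LinearEquiv.smulOfNeZero K K ((b : K) ^ p) (pow_ne_zero p hb0)), ?_, ?_⟩
    · rintro ⟨u, v⟩
      simp [mul_pow]
    · rintro ⟨u, v⟩
      simp only [LinearEquiv.prodCongr_apply, LinearEquiv.smulOfNeZero_apply, smul_eq_mul,
        mul_zero, map_mul, Prod.mk.injEq, true_and]
      linear_combination (-(frobeniusEquiv K p).symm u) * hb
end

section
/- Let p be a prime, m a positive integer, and K a finite field of cardinality p^(2m), with Frobenius automorphism σ(x) = x^p. For a ∈ Kˣ, let M_a be the K-vector space K × K equipped with the σ-semilinear map F(u,v) = (0, σ(u)) and the σ⁻¹-semilinear map V_a(u,v) = (0, a · σ⁻¹(u)). Declare a ~ a' if there exists a K-linear bijection g : K × K → K × K with g ∘ F = F ∘ g and g ∘ V_a = V_{a'} ∘ g. Then ~ is an equivalence relation on Kˣ and the number of equivalence classes is exactly p² − 1. -/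
/-- `a ~ a'` iff the Dieudonné modules `M_a = (K × K, F, V_a)` and `M_{a'}` are
isomorphic via a `K`-linear bijection commuting with `F(u,v) = (0, u^p)` and
intertwining `V_a(u,v) = (0, a·σ⁻¹(u))` with `V_{a'}`. -/
def twistRel (p : ℕ) [Fact p.Prime] (K : Type*) [Field K] [CharP K p] [PerfectRing K p]
    (a a' : Kˣ) : Prop :=
  ∃ g : (K × K) ≃ₗ[K] K × K,
    (∀ w : K × K, g (0, w.1 ^ p) = (0, (g w).1 ^ p)) ∧
    (∀ w : K × K, g (0, (a : K) * (frobeniusEquiv K p).symm w.1) =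
      (0, (a' : K) * (frobeniusEquiv K p).symm (g w).1))

theorem twistRel_iff_aux (p : ℕ) [Fact p.Prime] (K : Type*) [Field K] [CharP K p]
    [PerfectRing K p] (a a' : Kˣ) :
    twistRel p K a a' ↔ ∃ b : Kˣ, a' = a * b ^ (p ^ 2 - 1) := by
  have hp : p.Prime := Fact.out
  have hp0 : p ≠ 0 := hp.ne_zero
  have hp2 : p ^ 2 = (p ^ 2 - 1) + 1 := by
    have := Nat.pos_of_ne_zero (pow_ne_zero 2 hp0)
    omega
  constructor
  · rintro ⟨g, hF, hV⟩
    have h0 : ∀ v : K, (g (0, v)).1 = 0 := by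
      intro v
      have h := congrArg Prod.snd (hF (0, v))
      simp only [zero_pow hp0] at h
      have h1 : g ((0 : K), (0 : K)) = 0 := map_zero g
      rw [h1] at h
      exact (pow_eq_zero_iff hp0).1 h.symm
    have hα : (g (1, 0)).1 ≠ 0 := by
      intro hα
      have hall : ∀ w : K × K, (g w).1 = 0 := by
        intro w
        have hw : w = w.1 • ((1 : K), (0 : K)) + (0, w.2) := by ext <;> simp
        rw [hw, map_add, map_smul, Prod.fst_add, Prod.smul_fst, hα, h0]
        simp
      obtain ⟨w, hw⟩ := g.surjective (1, 0)
      have := hall w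
      rw [hw] at this
      exact one_ne_zero this
    have hF1 := congrArg Prod.snd (hF (1, 0))
    have hV1 := congrArg Prod.snd (hV (1, 0))
    simp only [one_pow, map_one, mul_one] at hF1 hV1
    have hs : ((0 : K), (a : K)) = (a : K) • ((0 : K), (1 : K)) := by ext <;> simp
    rw [hs, map_smul, Prod.smul_snd, hF1, smul_eq_mul] at hV1
    obtain ⟨β, hβ⟩ : ∃ β : K, β = (frobeniusEquiv K p).symm (g (1, 0)).1 := ⟨_, rfl⟩
    have hβp : (g (1, 0)).1 = β ^ p := by
      rw [hβ, frobeniusEquiv_symm_pow_p]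
    rw [← hβ, hβp] at hV1
    have hβ0 : β ≠ 0 := by
      rintro rfl
      exact hα (by rw [hβp, zero_pow hp0])
    refine ⟨Units.mk0 β hβ0, ?_⟩
    ext
    push_cast
    rw [Units.val_mk0]
    apply mul_right_cancel₀ hβ0
    rw [← hV1, mul_assoc, ← pow_succ, ← hp2, ← pow_mul, sq]
  · rintro ⟨b, rfl⟩
    have hb : (b : K) ≠ 0 := b.ne_zero
    refine ⟨LinearEquiv.prodCongr (LinearEquiv.smulOfNeZero K K ((b : K) ^ p) (pow_ne_zero _ hb))
      (LinearEquiv.smulOfNeZero K K ((b : K) ^ (p ^ 2)) (pow_ne_zero _ hb)), ?_, ?_⟩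
    · intro w
      ext
      · simp
      · simp [mul_pow, ← pow_mul, sq]
    · intro w
      have : (frobeniusEquiv K p).symm ((b : K) ^ p) = b := by
        rw [RingEquiv.symm_apply_eq, frobeniusEquiv_apply, frobenius_def]
      ext
      · simp
      · simp only [LinearEquiv.prodCongr_apply, LinearEquiv.smulOfNeZero_apply, smul_eq_mul,
          map_mul, this]
        push_cast
        nth_rewrite 1 [hp2]
        ring

/-- For a finite field `K` of cardinality `p^(2m)`, the relation `~` on `Kˣ` given by
isomorphism of the Dieudonné modules `M_a` is an equivalence relation with exactly
`p² − 1` equivalence classes. -/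
theorem stmt_13 (p m : ℕ) [Fact p.Prime] (hm : 0 < m) (K : Type*) [Field K] [Fintype K]
    [CharP K p] [PerfectRing K p] (hK : Fintype.card K = p ^ (2 * m)) :
    Equivalence (twistRel p K) ∧ Nat.card (Quot (twistRel p K)) = p ^ 2 - 1 := by
  have hiff := twistRel_iff_aux p K
  have hp : p.Prime := Fact.out
  let H : Subgroup Kˣ := (powMonoidHom (p ^ 2 - 1) : Kˣ →* Kˣ).range
  have hrel : twistRel p K = (QuotientGroup.leftRel H).r := by
    funext a a'
    apply propext
    rw [hiff]
    change _ ↔ (QuotientGroup.leftRel H) a a'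
    rw [QuotientGroup.leftRel_apply]
    constructor
    · rintro ⟨b, rfl⟩
      exact ⟨b, by simp⟩
    · rintro ⟨b, hb⟩
      refine ⟨b, ?_⟩
      rw [powMonoidHom_apply] at hb
      rw [hb, mul_inv_cancel_left]
  rw [hrel]
  refine ⟨(QuotientGroup.leftRel H).iseqv, ?_⟩
  change H.index = _
  have hc : Nat.card Kˣ = p ^ (2 * m) - 1 := by
    rw [Nat.card_units, Nat.card_eq_fintype_card, hK]
  rw [IsCyclic.index_powMonoidHom_range, hc]
  apply Nat.gcd_eq_right
  rw [pow_mul]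
  simpa using Nat.sub_dvd_pow_sub_pow (p ^ 2) 1 m
end
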